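/- (Soundness of the distinguished-coordinate MDP reduction.) Let F_q be a finite field with q elements, let Q_1, …, Q_m ∈ F_q^{n×n} be coefficient matrices, let ε > 0 and d ≥ 1, and let C ∈ F_q^{N×n} be a generator matrix of an ε-balanced code of minimum distance d. Define V' = {(C X Cᵀ, X[n,n]) : X ∈ F_q^{n×n}, X = Xᵀ, Q_ℓ(X) = 0 for all ℓ ∈ [m]} ⊆ F_q^{N×N} × F_q. If there is no nonzero x ∈ F_q^n with Q_ℓ(x xᵀ) = 0 for all ℓ ∈ [m], then every nonzero element (M, a) ∈ V' satisfies q · ‖M‖₀ ≥ (q+1) · d². -/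

import Mathlib

/-!
A nonzero symmetric `X` all of whose columns are multiples of one column `u` is `c ⬝ u uᵀ` with
`c ≠ 0`; if moreover `Q_ℓ(X) = 0` for all `ℓ`, then `u` solves the quadratic system. In the absence
of nonzero solutions, `X` therefore has two linearly independent columns `u`, `v`
(`exists_indep_cols`).

Consider the `q + 1` codewords `Cu` and `C(v + t u)`, `t ∈ F`, each of weight at least `d`. A
coordinate at which `Cu` or `Cv` is nonzero is nonzero in exactly `q` of them, so the union `S` of
the supports of `Cu` and `Cv` satisfies `q |S| ≥ (q + 1) d` (`card_support_union`). By symmetry of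
`X`, each column of `C X Cᵀ` with index in `S` is a nonzero codeword, hence has weight at least `d`,
and `q ‖C X Cᵀ‖₀ ≥ q |S| d ≥ (q + 1) d²`.
-/

open Matrix

/-- Hamming weight of a vector: the number of nonzero coordinates. -/
noncomputable def hammingWt {ι : Type*} [Fintype ι] {F : Type*} [Zero F] (x : ι → F) : ℕ :=
  Set.ncard {i | x i ≠ 0}

/-- Hamming weight of a matrix: the number of nonzero entries. -/
noncomputable def matWt {η κ : Type*} {F : Type*} [Zero F] (M : Matrix η κ F) : ℕ :=
  Set.ncard {p : η × κ | M p.1 p.2 ≠ 0}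

/-- `C` is a generator matrix of an `ε`-balanced code of minimum distance `d`:
`x ↦ Cx` is injective and every nonzero codeword `Cx` has Hamming weight in `[d, (1+ε)d]`. -/
def IsBalancedGen {F : Type*} [Field F] {N n : ℕ} (ε : ℝ) (d : ℕ)
    (C : Matrix (Fin N) (Fin n) F) : Prop :=
  Function.Injective C.mulVec ∧
  ∀ x : Fin n → F, x ≠ 0 →
    (d : ℝ) ≤ (hammingWt (C.mulVec x) : ℝ) ∧
    (hammingWt (C.mulVec x) : ℝ) ≤ (1 + ε) * d

/-- Evaluation of the coefficient matrix `Q` at the matrix `X`: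
`Q(X) = Σ_{i,j} Q[i,j] ⬝ X[i,j]`. -/
def quadEval {F : Type*} [Field F] {n : ℕ} (Q X : Matrix (Fin n) (Fin n) F) : F :=
  ∑ i, ∑ j, Q i j * X i j

open scoped Classical in
lemma hammingWt_eq_sum {ι : Type*} [Fintype ι] {F : Type*} [Zero F] (x : ι → F) :
    hammingWt x = ∑ i, if x i ≠ 0 then 1 else 0 := by
  rw [hammingWt, Set.ncard_eq_toFinset_card', Finset.sum_boole]
  simp

lemma matWt_eq_sum {η κ : Type*} [Fintype η] [Fintype κ] {F : Type*} [Zero F]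
    (M : Matrix η κ F) : matWt M = ∑ j, hammingWt (fun i => M i j) := by
  classical
  simp only [hammingWt_eq_sum]
  rw [matWt, Set.ncard_eq_toFinset_card', Finset.sum_comm, ← Fintype.sum_prod_type',
    Finset.sum_boole]
  simp

open scoped Classical in
/-- Among the `q + 1` values `a` and `b + t a` for `t ∈ F`, at most `q` are nonzero, and none is
if `a = b = 0`. -/
lemma count_pencil {F : Type*} [Field F] [Fintype F] (a b : F) :
    (if a ≠ 0 then 1 else 0) + (∑ t : F, if b + t * a ≠ 0 then 1 else 0)
      ≤ Fintype.card F * (if a ≠ 0 ∨ b ≠ 0 then 1 else 0) := by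
  by_cases ha : a = 0
  · by_cases hb : b = 0 <;> simp [ha, hb]
  · have h : (∑ t : F, if b + t * a ≠ 0 then 1 else 0) + 1 ≤ Fintype.card F := by
      rw [Finset.sum_boole]
      refine Finset.card_lt_univ_of_notMem (x := -b / a) ?_
      simp [ha]
    simp only [ne_eq, ha, not_false_eq_true, if_true, true_or, mul_one]
    simp only [ne_eq] at h
    omega

open scoped Classical in
/-- A pair of codewords spanning a code of minimum distance at least `d` has joint support of size
at least `(1 + 1/q) d`. -/
lemma card_support_union {F : Type*} [Field F] [Fintype F] {ι : Type*} [Fintype ι]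
    (d : ℕ) (x y : ι → F) (hx : d ≤ hammingWt x)
    (hy : ∀ t : F, d ≤ hammingWt (y + t • x)) :
    (Fintype.card F + 1) * d ≤
      Fintype.card F * ∑ i, if x i ≠ 0 ∨ y i ≠ 0 then 1 else 0 := by
  calc (Fintype.card F + 1) * d = d + ∑ _t : F, d := by simp; ring
    _ ≤ hammingWt x + ∑ t : F, hammingWt (y + t • x) :=
        Nat.add_le_add hx (Finset.sum_le_sum fun t _ => hy t)
    _ = ∑ i, ((if x i ≠ 0 then 1 else 0) + ∑ t : F, if y i + t * x i ≠ 0 then 1 else 0) := by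
        simp only [hammingWt_eq_sum, Pi.add_apply, Pi.smul_apply, smul_eq_mul]
        rw [Finset.sum_comm, ← Finset.sum_add_distrib]
    _ ≤ _ := by
        rw [Finset.mul_sum]
        exact Finset.sum_le_sum fun i _ => count_pencil (x i) (y i)

/-- A nonzero symmetric matrix that is not a scalar multiple of any `u uᵀ` has two linearly
independent columns (expressed as: one is nonzero, and no translate of the other by a multiple of
it vanishes). -/
lemma exists_indep_cols {F : Type*} [Field F] {n : ℕ} (X : Matrix (Fin n) (Fin n) F)
    (hX : X.IsSymm) (h0 : X ≠ 0)
    (h1 : ∀ (u : Fin n → F) (c : F), u ≠ 0 → c ≠ 0 → X ≠ c • vecMulVec u u) :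
    ∃ i j, X.col i ≠ 0 ∧ ∀ t : F, X.col j + t • X.col i ≠ 0 := by
  obtain ⟨k, i, hki⟩ : ∃ k i, X k i ≠ 0 := by
    by_contra! h
    exact h0 (Matrix.ext h)
  have hu : X.col i ≠ 0 := fun h => hki (congrFun h k)
  by_contra! hcon
  choose s hs using fun j => hcon i j hu
  have hs' : ∀ a j, X a j = -s j * X a i := fun a j => by
    have := congrFun (hs j) a
    simp only [Matrix.col_apply, Pi.add_apply, Pi.smul_apply, smul_eq_mul, Pi.zero_apply] at this
    linear_combination this
  -- Comparing `X k j` with `X j k` shows that the coefficients `s j` are proportional to `X j i`.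
  have hX' : X = (-s k / X k i) • vecMulVec (X.col i) (X.col i) := by
    ext a j
    have h := hX.apply k j
    rw [hs' k j, hs' j k] at h
    simp only [Matrix.smul_apply, vecMulVec_apply, Matrix.col_apply, smul_eq_mul]
    rw [hs' a j]
    field_simp
    linear_combination (-X a i) * h
  refine h1 _ _ hu (fun hc => h0 ?_) hX'
  rw [hX', hc, zero_smul]

/-- Soundness of the distinguished-coordinate MDP reduction: if no nonzero `x` satisfies
all the quadratic equations, then every nonzero element `(M, a)` of
`V' = {(C X Cᵀ, X[n,n]) : X = Xᵀ, Q_ℓ(X) = 0 ∀ℓ}` satisfies `q ⬝ ‖M‖₀ ≥ (q+1) d²`. -/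
theorem mdp_dist_reduction_soundness {F : Type*} [Field F] [Fintype F] {N n m : ℕ}
    (hn : 0 < n) (Q : Fin m → Matrix (Fin n) (Fin n) F)
    (ε : ℝ) (hε : 0 < ε) (d : ℕ) (hd : 1 ≤ d)
    (C : Matrix (Fin N) (Fin n) F) (hC : IsBalancedGen ε d C)
    (hno : ¬ ∃ x : Fin n → F, x ≠ 0 ∧ ∀ ℓ, quadEval (Q ℓ) (vecMulVec x x) = 0) :
    ∀ Ma : Matrix (Fin N) (Fin N) F × F,
      (∃ X : Matrix (Fin n) (Fin n) F,
        X.IsSymm ∧ (∀ ℓ, quadEval (Q ℓ) X = 0) ∧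
        Ma = (C * X * Cᵀ, X ⟨n - 1, by omega⟩ ⟨n - 1, by omega⟩)) →
      Ma ≠ 0 →
      Fintype.card F * matWt Ma.1 ≥ (Fintype.card F + 1) * d ^ 2 := by
  classical
  rintro _ ⟨X, hX, hQ, rfl⟩ hne
  have hwt : ∀ x : Fin n → F, x ≠ 0 → d ≤ hammingWt (C.mulVec x) := fun x hx => by
    exact_mod_cast (hC.2 x hx).1
  have h0 : X ≠ 0 := by
    rintro rfl
    exact hne (by simp)
  obtain ⟨i, j, hi, hj⟩ := exists_indep_cols X hX h0 (by
    rintro u c hu hc rfl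
    refine hno ⟨u, hu, fun ℓ => ?_⟩
    have h : quadEval (Q ℓ) (c • vecMulVec u u) = c * quadEval (Q ℓ) (vecMulVec u u) := by
      simp only [quadEval, Finset.mul_sum, Matrix.smul_apply, smul_eq_mul, mul_left_comm]
    have h' := hQ ℓ
    rw [h] at h'
    exact (mul_eq_zero.mp h').resolve_left hc)
  have hS := card_support_union d (C.mulVec (X.col i)) (C.mulVec (X.col j)) (hwt _ hi)
    (fun t => by
      rw [← Matrix.mulVec_smul, ← Matrix.mulVec_add]
      exact hwt _ (hj t))
  -- Column `b` of `C X Cᵀ` is the codeword of `X (C b)`, whose coordinate `a` is, by symmetry of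
  -- `X`, coordinate `b` of the codeword of column `a` of `X`.
  have hcol : ∀ b, (fun a => (C * X * Cᵀ) a b) = C.mulVec (X.mulVec (C b)) := fun b => by
    ext a
    rw [Matrix.mul_assoc]
    simp [Matrix.mul_apply, Matrix.mulVec, dotProduct]
  have hcoord : ∀ a b, X.mulVec (C b) a = C.mulVec (X.col a) b := fun a b => by
    simp only [Matrix.mulVec, dotProduct, Matrix.col_apply]
    exact Finset.sum_congr rfl fun e _ => by rw [hX.apply, mul_comm]
  have hM : (∑ b, if C.mulVec (X.col i) b ≠ 0 ∨ C.mulVec (X.col j) b ≠ 0 then 1 else 0) * d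
      ≤ matWt (C * X * Cᵀ) := by
    rw [matWt_eq_sum, Finset.sum_mul]
    refine Finset.sum_le_sum fun b _ => ?_
    split_ifs with hb
    · rw [one_mul, hcol]
      refine hwt _ fun hz => ?_
      rw [← hcoord, ← hcoord, hz] at hb
      simp at hb
    · simp
  calc (Fintype.card F + 1) * d ^ 2 = (Fintype.card F + 1) * d * d := by ring
    _ ≤ _ := Nat.mul_le_mul_right d hS
    _ ≤ _ := by
        rw [mul_assoc]
        exact Nat.mul_le_mul_left _ hM
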